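/- arXiv:1602.03542 — 8 statements merged into one kernel-verified Lean document; each statement's English description precedes it below -/
import Mathlib

section
/- Let F, G : M → ℝ be smooth functions whose Poisson bracket {F, G} is a constant function. Let φ^F, φ^G : ℝ → M → M be global flows of X_F and X_G respectively, i.e. φ^F 0 = id and for each y ∈ M the curve s ↦ φ^F s y is an integral curve of X_F through y, and similarly for G. Then the flows commute: φ^F s (φ^G t y) = φ^G t (φ^F s y) for all s, t ∈ ℝ and y ∈ M. -/
/-!
STATEMENT 8: On M := (Fin n → ℝ) × (Fin n → ℝ) with the standard symplectic form ω₀,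
let F, G be smooth functions whose Poisson bracket {F, G} is a constant function,
and let φF, φG be global flows of the Hamiltonian vector fields X_F, X_G.
Then the flows commute: φF s (φG t y) = φG t (φF s y) for all s, t, y.
-/

noncomputable section

/-- The phase space `(Fin n → ℝ) × (Fin n → ℝ)`. -/
abbrev M (n : ℕ) : Type := (Fin n → ℝ) × (Fin n → ℝ)

/-- The standard symplectic form on `M n`. -/
def ω₀ {n : ℕ} (x y : M n) : ℝ :=
  (∑ i, x.1 i * y.2 i) - ∑ i, x.2 i * y.1 i

/-!
The Lie bracket of the Hamiltonian vector fields `X` of `F` and `Y` of `G` is, up to sign, the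
Hamiltonian vector field of the Poisson bracket of `F` and `G`; when the latter is constant,
nondegeneracy gives `[X, Y] = 0`. Then `Y` along an integral curve of `X` solves the variational
equation of `X`, that is, the equation satisfied by the derivative of the flow `φ` of `X` in its
initial point. Hence each `φ s` maps integral curves of `Y` to integral curves of `Y`, and by
uniqueness it commutes with the flow of `Y`.
-/

open Function Metric Set Topology VectorField
open scoped NNReal

section IntegralCurves

theorem exists_lipschitzOnWith_closedBall_of_isCompact {α β : Type*} [PseudoMetricSpace α]
    [PseudoMetricSpace β] {f : α → β} (hf : LocallyLipschitz f) {k : Set α} (hk : IsCompact k) :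
    ∃ K : ℝ≥0, ∃ r > 0, ∀ x ∈ k, LipschitzOnWith K f (closedBall x r) := by
  refine hk.induction_on ⟨0, 1, one_pos, by simp⟩ ?mono ?union ?nhds
  case mono =>
    rintro s t hst ⟨K, r, hr, h⟩
    exact ⟨K, r, hr, fun x hx => h x (hst hx)⟩
  case union =>
    rintro s t ⟨K, r, hr, h⟩ ⟨K', r', hr', h'⟩
    refine ⟨max K K', min r r', lt_min hr hr', ?_⟩
    rintro x (hx | hx)
    · exact ((h x hx).mono (closedBall_subset_closedBall (min_le_left _ _))).weaken
        (le_max_left _ _)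
    · exact ((h' x hx).mono (closedBall_subset_closedBall (min_le_right _ _))).weaken
        (le_max_right _ _)
  case nhds =>
    intro x _
    obtain ⟨K, t, ht, h⟩ := hf x
    obtain ⟨r, hr, hrt⟩ := nhds_basis_closedBall.mem_iff.1 ht
    have hr2 : 0 < r / 2 := half_pos hr
    refine ⟨closedBall x (r / 2), mem_nhdsWithin_of_mem_nhds (closedBall_mem_nhds x hr2),
      K, r / 2, hr2, fun y hy => h.mono ((closedBall_subset_closedBall' ?_).trans hrt)⟩
    linarith [mem_closedBall.1 hy]

variable {E : Type*} [NormedAddCommGroup E] [NormedSpace ℝ E]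

theorem exists_norm_sub_sub_fderiv_le_of_isCompact {F : Type*} [NormedAddCommGroup F]
    [NormedSpace ℝ F] {f : E → F} (hf : ContDiff ℝ 1 f) {k : Set E} (hk : IsCompact k)
    {ε : ℝ} (hε : 0 < ε) :
    ∃ r > 0, ∀ x ∈ k, ∀ z ∈ ball x r, ‖f z - f x - fderiv ℝ f x (z - x)‖ ≤ ε * ‖z - x‖ := by
  have hf' : Continuous (fderiv ℝ f) := hf.continuous_fderiv one_ne_zero
  obtain ⟨r, hr, h⟩ := mem_uniformity_dist.1 <|
    hk.uniformContinuousAt_of_continuousAt _ (fun _ _ => hf'.continuousAt) (dist_mem_uniformity hε)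
  refine ⟨r, hr, fun x hx z hz => ?_⟩
  refine (convex_ball x r).norm_image_sub_le_of_norm_fderiv_le'
    (fun y _ => hf.differentiable one_ne_zero y) (fun y hy => ?_) (mem_ball_self hr) hz
  rw [← dist_eq_norm, dist_comm]
  exact (h (mem_ball'.1 hy) hx : dist (fderiv ℝ f x) (fderiv ℝ f y) < ε).le

/-- Continuous induction: as long as `y` stays in the tube of radius `r` around `x`, Grönwall's
inequality keeps it strictly inside. -/
theorem dist_le_mul_exp_of_lipschitzOnWith_closedBall {v : ℝ → E → E} {x y : ℝ → E} {K : ℝ≥0}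
    {a b r : ℝ} (hv : ∀ t ∈ Icc a b, LipschitzOnWith K (v t) (closedBall (x t) r))
    (hx : IsIntegralCurve x v) (hy : IsIntegralCurve y v)
    (hr : dist (y a) (x a) * Real.exp (K * (b - a)) < r) :
    ∀ t ∈ Icc a b, dist (y t) (x t) ≤ dist (y a) (x a) * Real.exp (K * (t - a)) := by
  have hr₀ : 0 ≤ r := le_trans (by positivity) hr.le
  have gronwall : ∀ t ∈ Icc a b, Icc a t ⊆ {u | dist (y u) (x u) ≤ r} →
      dist (y t) (x t) ≤ dist (y a) (x a) * Real.exp (K * (t - a)) := fun t ht hsub =>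
    dist_le_of_trajectories_ODE_of_mem (fun u hu => hv u ⟨hu.1, hu.2.le.trans ht.2⟩)
      hy.continuous.continuousOn (fun u _ => (hy u).hasDerivWithinAt)
      (fun u hu => hsub ⟨hu.1, hu.2.le⟩)
      hx.continuous.continuousOn (fun u _ => (hx u).hasDerivWithinAt)
      (fun u _ => mem_closedBall_self hr₀) le_rfl t ⟨ht.1, le_rfl⟩
  have lt_r : ∀ t ∈ Icc a b, dist (y a) (x a) * Real.exp (K * (t - a)) < r := fun t ht =>
    lt_of_le_of_lt (by gcongr; exact ht.2) hr
  have hdist : Continuous fun t => dist (y t) (x t) := hy.continuous.dist hx.continuous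
  have stay : Icc a b ⊆ {u | dist (y u) (x u) ≤ r} := by
    rcases lt_or_ge b a with hab | hab
    · simp [Icc_eq_empty_of_lt hab]
    refine IsClosed.Icc_subset_of_forall_mem_nhdsGT_of_Icc_subset
      ((isClosed_le hdist continuous_const).inter isClosed_Icc) ?_ fun t ht hsub => ?_
    · simpa using (lt_r a ⟨le_rfl, hab⟩).le
    · have ht' := Ico_subset_Icc_self ht
      have : ∀ᶠ u in 𝓝 t, dist (y u) (x u) < r :=
        hdist.continuousAt.eventually_lt_const ((gronwall t ht' hsub).trans_lt (lt_r t ht'))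
      exact mem_nhdsWithin_of_mem_nhds (this.mono fun u hu => hu.le)
  exact fun t ht => gronwall t ht fun u hu => stay ⟨hu.1, hu.2.trans ht.2⟩

theorem exists_dist_le_mul_of_isIntegralCurve {X : E → E} (hX : LocallyLipschitz X) {x : ℝ → E}
    (hx : IsIntegralCurve x fun _ => X) (T : ℝ) :
    ∃ r > 0, ∃ C > 0, ∀ y : ℝ → E, (IsIntegralCurve y fun _ => X) → dist (y 0) (x 0) < r →
      ∀ t ∈ Icc 0 T, dist (y t) (x t) ≤ C * dist (y 0) (x 0) := by
  obtain ⟨K, r, hr, hK⟩ := exists_lipschitzOnWith_closedBall_of_isCompact hX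
    ((isCompact_Icc (a := 0) (b := T)).image hx.continuous)
  refine ⟨r / Real.exp (K * T), by positivity, Real.exp (K * T), Real.exp_pos _,
    fun y hy hyr t ht => ?_⟩
  calc dist (y t) (x t) ≤ dist (y 0) (x 0) * Real.exp (K * (t - 0)) :=
        dist_le_mul_exp_of_lipschitzOnWith_closedBall
          (fun u hu => hK (x u) (mem_image_of_mem x hu)) hx hy
          (by simpa [lt_div_iff₀ (Real.exp_pos _)] using hyr) t ht
    _ ≤ Real.exp (K * T) * dist (y 0) (x 0) := by
        rw [mul_comm, sub_zero]
        gcongr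
        exact ht.2

theorem eq_of_isIntegralCurve {X : E → E} (hX : LocallyLipschitz X) {x y : ℝ → E}
    (hx : IsIntegralCurve x fun _ => X) (hy : IsIntegralCurve y fun _ => X) {t₀ : ℝ}
    (h : x t₀ = y t₀) : x = y := by
  have hclosed : IsClosed {t | x t = y t} := isClosed_eq hx.continuous hy.continuous
  have hopen : IsOpen {t | x t = y t} := isOpen_iff_mem_nhds.2 fun t ht => by
    obtain ⟨K, s, hs, hK⟩ := hX (x t)
    have hxs : ∀ᶠ u in 𝓝 t, x u ∈ s := hx.continuous.continuousAt hs
    have hys : ∀ᶠ u in 𝓝 t, y u ∈ s := hy.continuous.continuousAt (ht ▸ hs)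
    exact ODE_solution_unique_of_eventually (v := fun _ => X) (s := fun _ => s)
      (.of_forall fun _ => hK) (hxs.mono fun u hu => ⟨hx u, hu⟩)
      (hys.mono fun u hu => ⟨hy u, hu⟩) ht
  have huniv := IsClopen.eq_univ ⟨hclosed, hopen⟩ ⟨t₀, h⟩
  exact funext fun t => huniv.ge (mem_univ t)

theorem isIntegralCurve_neg_comp_neg {X : E → E} {x : ℝ → E} (hx : IsIntegralCurve x fun _ => X) :
    IsIntegralCurve (fun t => x (-t)) fun _ => -X := fun t => by
  simpa [comp_def] using (hx (-t)).scomp t (hasDerivAt_neg t)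

end IntegralCurves

section VariationalEquation

variable {E : Type*} [NormedAddCommGroup E] [NormedSpace ℝ E] {X : E → E} {x : ℝ → E}

theorem exists_norm_sub_sub_fderiv_le_of_isIntegralCurve (hX : ContDiff ℝ 1 X)
    (hx : IsIntegralCurve x fun _ => X) (T : ℝ) {ε : ℝ} (hε : 0 < ε) :
    ∃ r > 0, ∀ y : ℝ → E, (IsIntegralCurve y fun _ => X) → dist (y 0) (x 0) < r → ∀ t ∈ Icc 0 T,
      ‖X (y t) - X (x t) - fderiv ℝ X (x t) (y t - x t)‖ ≤ ε * ‖y 0 - x 0‖ := by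
  obtain ⟨r, hr, C, hC, hdist⟩ := exists_dist_le_mul_of_isIntegralCurve hX.locallyLipschitz hx T
  obtain ⟨ρ, hρ, hrem⟩ := exists_norm_sub_sub_fderiv_le_of_isCompact hX
    ((isCompact_Icc (a := 0) (b := T)).image hx.continuous) (div_pos hε hC)
  refine ⟨min r (ρ / C), by positivity, fun y hy hyr t ht => ?_⟩
  have hyC : dist (y t) (x t) ≤ C * dist (y 0) (x 0) :=
    hdist y hy (hyr.trans_le (min_le_left _ _)) t ht
  have hyρ : dist (y t) (x t) < ρ := hyC.trans_lt <|
    (lt_div_iff₀' hC).1 (hyr.trans_le (min_le_right _ _))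
  rw [dist_eq_norm, dist_eq_norm] at hyC
  calc _ ≤ ε / C * ‖y t - x t‖ := hrem (x t) (mem_image_of_mem x ht) (y t) hyρ
    _ ≤ ε / C * (C * ‖y 0 - x 0‖) := by gcongr
    _ = ε * ‖y 0 - x 0‖ := by field_simp

theorem gronwallBound_mul_mul (c δ K ε t : ℝ) :
    gronwallBound (c * δ) K (c * ε) t = c * gronwallBound δ K ε t := by
  unfold gronwallBound
  split_ifs <;> ring

theorem exists_norm_sub_sub_le_of_variational_equation (hX : ContDiff ℝ 1 X)
    (hx : IsIntegralCurve x fun _ => X) {T : ℝ} (hT : 0 ≤ T) :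
    ∃ C > 0, ∀ ε > 0, ∃ r > 0, ∀ y v : ℝ → E, (IsIntegralCurve y fun _ => X) →
      (IsIntegralCurve v fun t => fderiv ℝ X (x t)) → dist (y 0) (x 0) < r →
      ‖y T - x T - v T‖ ≤ C * (‖y 0 - x 0 - v 0‖ + ε * ‖y 0 - x 0‖) := by
  have hDX : Continuous fun t => fderiv ℝ X (x t) :=
    (hX.continuous_fderiv one_ne_zero).comp hx.continuous
  obtain ⟨K, hK⟩ := (isCompact_Icc (a := 0) (b := T)).exists_bound_of_continuousOn hDX.continuousOn
  have hK₀ : 0 ≤ K := (norm_nonneg _).trans (hK 0 ⟨le_rfl, hT⟩)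
  have hC : 0 < gronwallBound 1 K 1 T := one_pos.trans_le <| by
    simpa [gronwallBound_x0] using gronwallBound_mono zero_le_one zero_le_one hK₀ hT
  refine ⟨gronwallBound 1 K 1 T, hC, fun ε hε => ?_⟩
  obtain ⟨r, hr, hrem⟩ := exists_norm_sub_sub_fderiv_le_of_isIntegralCurve hX hx T hε
  refine ⟨r, hr, fun y v hy hv hyr => ?_⟩
  set m := ‖y 0 - x 0 - v 0‖ + ε * ‖y 0 - x 0‖ with hm
  have hderiv : ∀ t, HasDerivAt (fun t => y t - x t - v t)
      (X (y t) - X (x t) - fderiv ℝ X (x t) (v t)) t := fun t => ((hy t).sub (hx t)).sub (hv t)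
  have hbound : ∀ t ∈ Ico 0 T, ‖X (y t) - X (x t) - fderiv ℝ X (x t) (v t)‖ ≤
      K * ‖y t - x t - v t‖ + m := fun t ht => by
    have ht' := Ico_subset_Icc_self ht
    calc _ = ‖fderiv ℝ X (x t) (y t - x t - v t) +
            (X (y t) - X (x t) - fderiv ℝ X (x t) (y t - x t))‖ := by
          rw [map_sub _ (y t - x t)]; congr 1; abel
      _ ≤ K * ‖y t - x t - v t‖ + ε * ‖y 0 - x 0‖ :=
          norm_add_le_of_le ((fderiv ℝ X (x t)).le_of_opNorm_le (hK t ht') _) (hrem y hy hyr t ht')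
      _ ≤ K * ‖y t - x t - v t‖ + m := by simp [hm]
  have hgronwall := norm_le_gronwallBound_of_norm_deriv_right_le (δ := m)
    (HasDerivAt.continuousOn fun t _ => hderiv t) (fun t _ => (hderiv t).hasDerivWithinAt)
    (le_add_of_nonneg_right (by positivity)) hbound T ⟨hT, le_rfl⟩
  simpa [mul_comm, ← gronwallBound_mul_mul] using hgronwall

variable {y : ℝ → ℝ → E} {v : ℝ → E} {u₀ : ℝ}

theorem hasDerivAt_of_variational_equation_of_nonneg (hX : ContDiff ℝ 1 X)
    (hy : ∀ u, IsIntegralCurve (y u) fun _ => X)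
    (hv : IsIntegralCurve v fun t => fderiv ℝ X (y u₀ t))
    (h₀ : HasDerivAt (fun u => y u 0) (v 0) u₀) {t : ℝ} (ht : 0 ≤ t) :
    HasDerivAt (fun u => y u t) (v t) u₀ := by
  obtain ⟨C, hC, hest⟩ := exists_norm_sub_sub_le_of_variational_equation hX (hy u₀) ht
  obtain ⟨B, hB, hlip⟩ := h₀.isBigO_sub.exists_pos
  refine hasDerivAt_iff_isLittleO.2 (Asymptotics.isLittleO_iff.2 fun c hc => ?_)
  obtain ⟨r, hr, hest⟩ := hest (c / (2 * C * B)) (by positivity)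
  have hclose : ∀ᶠ u in 𝓝 u₀, dist (y u 0) (y u₀ 0) < r :=
    h₀.continuousAt (ball_mem_nhds _ hr)
  have hlin : ∀ᶠ u in 𝓝 u₀,
      ‖y u 0 - y u₀ 0 - (u - u₀) • v 0‖ ≤ c / (2 * C) * ‖u - u₀‖ :=
    (hasDerivAt_iff_isLittleO.1 h₀).bound (by positivity)
  filter_upwards [hlin, hlip.bound, hclose] with u hu huB hur
  have hscaled : IsIntegralCurve (fun t => (u - u₀) • v t) fun t => fderiv ℝ X (y u₀ t) :=
    fun t => by simpa using (hv t).fun_const_smul (u - u₀)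
  calc ‖y u t - y u₀ t - (u - u₀) • v t‖
    _ ≤ C * (‖y u 0 - y u₀ 0 - (u - u₀) • v 0‖ + c / (2 * C * B) * ‖y u 0 - y u₀ 0‖) :=
        hest _ _ (hy u) hscaled hur
    _ ≤ C * (c / (2 * C) * ‖u - u₀‖ + c / (2 * C * B) * (B * ‖u - u₀‖)) := by gcongr
    _ = c * ‖u - u₀‖ := by field_simp; ring

theorem hasDerivAt_of_variational_equation (hX : ContDiff ℝ 1 X)
    (hy : ∀ u, IsIntegralCurve (y u) fun _ => X)
    (hv : IsIntegralCurve v fun t => fderiv ℝ X (y u₀ t))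
    (h₀ : HasDerivAt (fun u => y u 0) (v 0) u₀) (t : ℝ) :
    HasDerivAt (fun u => y u t) (v t) u₀ := by
  rcases le_total 0 t with ht | ht
  · exact hasDerivAt_of_variational_equation_of_nonneg hX hy hv h₀ ht
  · have hv' : IsIntegralCurve (fun s => v (-s)) fun s => fderiv ℝ (-X) (y u₀ (-s)) := fun s => by
      simpa [comp_def, fderiv_neg] using (hv (-s)).scomp s (hasDerivAt_neg s)
    simpa using hasDerivAt_of_variational_equation_of_nonneg hX.neg
      (fun u => isIntegralCurve_neg_comp_neg (hy u)) hv' (by simpa using h₀) (neg_nonneg.2 ht)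

end VariationalEquation

section Flows

variable {E : Type*} [NormedAddCommGroup E] [NormedSpace ℝ E]

/-- `φ` is the flow of a complete autonomous vector field `X`, written `φ t y` for the position at
time `t` of the integral curve of `X` through `y`. -/
structure IsGlobalFlow (φ : ℝ → E → E) (X : E → E) : Prop where
  map_zero (y : E) : φ 0 y = y
  isIntegralCurve (y : E) : IsIntegralCurve (fun t => φ t y) fun _ => X

variable {X Y : E → E} {φ ψ : ℝ → E → E}

namespace IsGlobalFlow

theorem isIntegralCurve_comp_of_lieBracket_eq_zero (hφ : IsGlobalFlow φ X) (hX : ContDiff ℝ 1 X)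
    (hY : Differentiable ℝ Y) (hXY : lieBracket ℝ X Y = 0) {γ : ℝ → E}
    (hγ : IsIntegralCurve γ fun _ => Y) (t : ℝ) :
    IsIntegralCurve (fun u => φ t (γ u)) fun _ => Y := fun u => by
  have hv : IsIntegralCurve (fun s => Y (φ s (γ u))) fun s => fderiv ℝ X (φ s (γ u)) := by
    intro s
    have hcomm := sub_eq_zero.1 (congrFun hXY (φ s (γ u)))
    simpa only [hcomm, comp_def] using
      (hY _).hasFDerivAt.comp_hasDerivAt s (hφ.isIntegralCurve (γ u) s)
  exact hasDerivAt_of_variational_equation (y := fun u s => φ s (γ u)) hX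
    (fun u => hφ.isIntegralCurve (γ u)) hv (by simpa [hφ.map_zero] using hγ u) t

theorem commute_of_lieBracket_eq_zero (hφ : IsGlobalFlow φ X) (hψ : IsGlobalFlow ψ Y)
    (hX : ContDiff ℝ 1 X) (hY : ContDiff ℝ 1 Y) (hXY : lieBracket ℝ X Y = 0) (s t : ℝ) :
    Function.Commute (φ s) (ψ t) := fun y =>
  congrFun (eq_of_isIntegralCurve hY.locallyLipschitz
    (hφ.isIntegralCurve_comp_of_lieBracket_eq_zero hX (hY.differentiable one_ne_zero) hXY
      (hψ.isIntegralCurve y) s)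
    (hψ.isIntegralCurve (φ s y)) (t₀ := 0) (by simp only [hψ.map_zero])) t

end IsGlobalFlow

end Flows

section Hamiltonian

variable {E : Type*} [NormedAddCommGroup E] [NormedSpace ℝ E] {ω : E →L[ℝ] E →L[ℝ] ℝ}
  {F G : E → ℝ} {X Y : E → E}

/-- `X` is a Hamiltonian vector field of `F` with respect to `ω`, in the sign convention
`ω(X, ·) = dF`. -/
def IsHamiltonianVectorField (ω : E →L[ℝ] E →L[ℝ] ℝ) (F : E → ℝ) (X : E → E) : Prop :=
  ∀ x w, ω (X x) w = fderiv ℝ F x w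

namespace IsHamiltonianVectorField

theorem fderiv_eq (hX : IsHamiltonianVectorField ω F X) : fderiv ℝ F = fun x => ω (X x) :=
  funext fun x => ContinuousLinearMap.ext fun w => (hX x w).symm

theorem contDiff (hX : IsHamiltonianVectorField ω F X) (hω : ω.HasLeftInverse)
    {m n : WithTop ℕ∞} (hF : ContDiff ℝ n F) (hmn : m + 1 ≤ n) : ContDiff ℝ m X := by
  have h := hω.leftInverse.contDiff.comp (hF.fderiv_right hmn)
  simpa only [hX.fderiv_eq, comp_def, hω.leftInverse_leftInverse (X _)] using h

theorem apply_fderiv_comm (hX : IsHamiltonianVectorField ω F X) (hF : Differentiable ℝ F)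
    {x : E} (hXd : DifferentiableAt ℝ X x) (v w : E) :
    ω (fderiv ℝ X x v) w = ω (fderiv ℝ X x w) v :=
  second_derivative_symmetric (f := F) (f' := fun x => ω (X x)) (f'' := ω ∘L fderiv ℝ X x)
    (fun y => by simpa only [hX.fderiv_eq] using (hF y).hasFDerivAt)
    (ω.hasFDerivAt.comp x hXd.hasFDerivAt) v w

theorem poissonBracket (hX : IsHamiltonianVectorField ω F X)
    (hY : IsHamiltonianVectorField ω G Y) (hω : ω.toLinearMap₁₂.IsAlt) (hF : Differentiable ℝ F)
    (hG : Differentiable ℝ G) (hXd : Differentiable ℝ X) (hYd : Differentiable ℝ Y) :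
    IsHamiltonianVectorField ω (fun x => fderiv ℝ F x (Y x)) (lieBracket ℝ Y X) := fun x w => by
  have hskew : ω (X x) (fderiv ℝ Y x w) = -ω (fderiv ℝ Y x w) (X x) :=
    (hω.neg (fderiv ℝ Y x w) (X x)).symm
  have hbracket : fderiv ℝ (fun x => fderiv ℝ F x (Y x)) x w =
      ω (X x) (fderiv ℝ Y x w) + ω (fderiv ℝ X x w) (Y x) := by
    have h := (ω.hasFDerivAt.comp x (hXd x).hasFDerivAt).clm_apply (hYd x).hasFDerivAt
    simpa [hX.fderiv_eq, comp_def] using DFunLike.congr_fun h.fderiv w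
  calc ω (lieBracket ℝ Y X x) w
    _ = ω (fderiv ℝ X x (Y x)) w - ω (fderiv ℝ Y x (X x)) w := by simp [lieBracket]
    _ = ω (fderiv ℝ X x w) (Y x) - ω (fderiv ℝ Y x w) (X x) := by
        rw [hX.apply_fderiv_comm hF (hXd x), hY.apply_fderiv_comm hG (hYd x)]
    _ = fderiv ℝ (fun x => fderiv ℝ F x (Y x)) x w := by
        rw [hbracket, hskew]; ring

theorem lieBracket_eq_zero (hX : IsHamiltonianVectorField ω F X)
    (hY : IsHamiltonianVectorField ω G Y) (hω : ω.toLinearMap₁₂.IsAlt) (hω' : Injective ω)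
    (hF : Differentiable ℝ F) (hG : Differentiable ℝ G) (hXd : Differentiable ℝ X)
    (hYd : Differentiable ℝ Y) {k : ℝ} (hk : ∀ x, fderiv ℝ F x (Y x) = k) :
    lieBracket ℝ X Y = 0 := by
  have hYX : lieBracket ℝ Y X = 0 := funext fun x => hω' <| ContinuousLinearMap.ext fun w => by
    simpa [hk] using hX.poissonBracket hY hω hF hG hXd hYd x w
  exact funext fun x => by rw [lieBracket_swap, hYX, Pi.zero_apply, neg_zero]

end IsHamiltonianVectorField

theorem hamiltonian_flows_commute_of_constant_bracket_general (hω : ω.toLinearMap₁₂.IsAlt)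
    (hω' : Injective ω) (hF : Differentiable ℝ F) (hG : Differentiable ℝ G)
    (hX : IsHamiltonianVectorField ω F X) (hY : IsHamiltonianVectorField ω G Y)
    (hXc : ContDiff ℝ 1 X) (hYc : ContDiff ℝ 1 Y) {k : ℝ} (hk : ∀ x, fderiv ℝ F x (Y x) = k)
    {φ ψ : ℝ → E → E} (hφ : IsGlobalFlow φ X) (hψ : IsGlobalFlow ψ Y) (s t : ℝ) :
    Function.Commute (φ s) (ψ t) :=
  hφ.commute_of_lieBracket_eq_zero hψ hXc hYc
    (hX.lieBracket_eq_zero hY hω hω' hF hG (hXc.differentiable one_ne_zero)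
      (hYc.differentiable one_ne_zero) hk) s t

end Hamiltonian

section StandardSymplecticForm

variable {n : ℕ}

theorem ω₀_eq_dotProduct (x y : M n) : ω₀ x y = x.1 ⬝ᵥ y.2 - x.2 ⬝ᵥ y.1 := rfl

/-- The standard symplectic form `ω₀` as a continuous bilinear map. -/
def standardSymplecticForm (n : ℕ) : M n →L[ℝ] M n →L[ℝ] ℝ :=
  (LinearMap.mk₂ ℝ ω₀
    (fun x y z => by simp only [ω₀_eq_dotProduct, Prod.fst_add, Prod.snd_add, add_dotProduct]; ring)
    (fun c x y => by simp [ω₀_eq_dotProduct, mul_sub])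
    (fun x y z => by simp only [ω₀_eq_dotProduct, Prod.fst_add, Prod.snd_add, dotProduct_add]; ring)
    (fun c x y => by simp [ω₀_eq_dotProduct, mul_sub])).toContinuousBilinearMap

theorem standardSymplecticForm_apply (x y : M n) :
    standardSymplecticForm n x y = x.1 ⬝ᵥ y.2 - x.2 ⬝ᵥ y.1 := rfl

theorem isAlt_standardSymplecticForm : (standardSymplecticForm n).toLinearMap₁₂.IsAlt := fun x => by
  simp [standardSymplecticForm_apply, dotProduct_comm x.2]

theorem injective_standardSymplecticForm : Injective (standardSymplecticForm n) := fun x y h => by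
  refine Prod.ext (dotProduct_eq _ _ fun p => ?_) (dotProduct_eq _ _ fun q => ?_)
  · simpa [standardSymplecticForm_apply] using DFunLike.congr_fun h (0, p)
  · simpa [standardSymplecticForm_apply] using DFunLike.congr_fun h (q, 0)

theorem hasLeftInverse_standardSymplecticForm : (standardSymplecticForm n).HasLeftInverse :=
  .of_injective_of_finiteDimensional injective_standardSymplecticForm

end StandardSymplecticForm

theorem hamiltonian_flows_commute_of_constant_bracket
    {n : ℕ} (hn : 1 ≤ n)
    (F G : M n → ℝ) (hF : ContDiff ℝ (⊤ : ℕ∞) F) (hG : ContDiff ℝ (⊤ : ℕ∞) G)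
    -- XF, XG are the Hamiltonian vector fields of F and G
    (XF XG : M n → M n)
    (hXF : ∀ x w : M n, ω₀ (XF x) w = fderiv ℝ F x w)
    (hXG : ∀ x w : M n, ω₀ (XG x) w = fderiv ℝ G x w)
    -- the Poisson bracket {F, G} is a constant function
    (k : ℝ) (hk : ∀ x : M n, fderiv ℝ F x (XG x) = k)
    -- φF and φG are global flows of XF and XG
    (φF φG : ℝ → M n → M n)
    (hφF0 : ∀ y : M n, φF 0 y = y)
    (hφF : ∀ (y : M n) (s : ℝ), HasDerivAt (fun t => φF t y) (XF (φF s y)) s)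
    (hφG0 : ∀ y : M n, φG 0 y = y)
    (hφG : ∀ (y : M n) (s : ℝ), HasDerivAt (fun t => φG t y) (XG (φG s y)) s) :
    ∀ (s t : ℝ) (y : M n), φF s (φG t y) = φG t (φF s y) := fun s t =>
  have hX : IsHamiltonianVectorField (standardSymplecticForm n) F XF := hXF
  have hY : IsHamiltonianVectorField (standardSymplecticForm n) G XG := hXG
  hamiltonian_flows_commute_of_constant_bracket_general isAlt_standardSymplecticForm
    injective_standardSymplecticForm (hF.differentiable (by simp)) (hG.differentiable (by simp))
    hX hY (hX.contDiff hasLeftInverse_standardSymplecticForm (contDiff_infty.1 hF 2) (by norm_num))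
    (hY.contDiff hasLeftInverse_standardSymplecticForm (contDiff_infty.1 hG 2) (by norm_num))
    hk ⟨hφF0, hφF⟩ ⟨hφG0, hφG⟩ s t
end
end

section
/- In the setting of a weakly Hamiltonian action with Casimir-valued cocycle, the flow evaluation ζ(s) := ρ u (φ s) is infinitely differentiable, its derivative satisfies ζ'(s) = ρ ⁅u,v⁆ (φ s) + c u v for all s ∈ ℝ, and its iterated derivatives at 0 are given by iteratedDeriv 0 ζ 0 = ρ u x and, for every j ≥ 1, iteratedDeriv j ζ 0 = ρ (b j) x + c (b (j−1)) v. -/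
/-!
STATEMENT 9: Weakly Hamiltonian action setting.  The flow evaluation
ζ(s) := ρ u (φ s) is infinitely differentiable, satisfies
ζ'(s) = ρ ⁅u,v⁆ (φ s) + c u v, and its iterated derivatives at 0 are
iteratedDeriv 0 ζ 0 = ρ u x and, for j ≥ 1,
iteratedDeriv j ζ 0 = ρ (b j) x + c (b (j−1)) v.
-/

noncomputable section

section DerivativeSequence

variable {𝕜 F : Type*} [NontriviallyNormedField 𝕜] [NormedAddCommGroup F] [NormedSpace 𝕜 F]

theorem iteratedDeriv_eq_of_hasDerivAt_succ {f : ℕ → 𝕜 → F}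
    (hf : ∀ j s, HasDerivAt (f j) (f (j + 1) s) s) (j : ℕ) :
    iteratedDeriv j (f 0) = f j := by
  induction j with
  | zero => exact iteratedDeriv_zero
  | succ j ih => rw [iteratedDeriv_succ, ih, deriv_eq (hf j)]

theorem contDiff_infty_of_hasDerivAt_succ {f : ℕ → 𝕜 → F}
    (hf : ∀ j s, HasDerivAt (f j) (f (j + 1) s) s) :
    ContDiff 𝕜 (⊤ : ℕ∞) (f 0) := by
  refine contDiff_of_differentiable_iteratedDeriv fun j _ => ?_
  rw [iteratedDeriv_eq_of_hasDerivAt_succ hf j]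
  exact fun s => (hf j s).differentiableAt

variable {f : ℕ → 𝕜 → F} {a : ℕ → F}

theorem iteratedDeriv_succ_of_hasDerivAt_add_const
    (hf : ∀ j s, HasDerivAt (f j) (f (j + 1) s + a j) s) (j : ℕ) :
    iteratedDeriv (j + 1) (f 0) = fun s => f (j + 1) s + a j := by
  rw [iteratedDeriv_succ', deriv_eq (hf 0)]
  exact iteratedDeriv_eq_of_hasDerivAt_succ (f := fun j s => f (j + 1) s + a j)
    (fun j s => (hf (j + 1) s).add_const (a j)) j

theorem contDiff_infty_of_hasDerivAt_add_const
    (hf : ∀ j s, HasDerivAt (f j) (f (j + 1) s + a j) s) :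
    ContDiff 𝕜 (⊤ : ℕ∞) (f 0) := by
  refine contDiff_infty_iff_deriv.2 ⟨fun s => (hf 0 s).differentiableAt, ?_⟩
  rw [deriv_eq (hf 0)]
  exact contDiff_infty_of_hasDerivAt_succ (f := fun j s => f (j + 1) s + a j)
    fun j s => (hf (j + 1) s).add_const (a j)

end DerivativeSequence

/- Along an integral curve of `V`, differentiation acts on the evaluations of `ρ w` as `w ↦ ⁅w, v⁆`
up to the constant `c w`, and that constant is killed by the next differentiation: hence only the
last cocycle value survives in each iterated derivative. -/
theorem flow_evaluation_derivatives_general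
    {𝕜 E F : Type*} [NontriviallyNormedField 𝕜]
    [NormedAddCommGroup E] [NormedSpace 𝕜 E] [NormedAddCommGroup F] [NormedSpace 𝕜 F]
    {𝔤 : Type*} [Bracket 𝔤 𝔤]
    (ρ : 𝔤 → E → F) (hρ : ∀ w, Differentiable 𝕜 (ρ w))
    (V : E → E) (v : 𝔤) (c : 𝔤 → F)
    (hc : ∀ w x, fderiv 𝕜 (ρ w) x (V x) = ρ ⁅w, v⁆ x + c w)
    (u : 𝔤) (b : ℕ → 𝔤) (hb0 : b 0 = u) (hbs : ∀ j, b (j + 1) = ⁅b j, v⁆)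
    (φ : 𝕜 → E) (hφ : ∀ s, HasDerivAt φ (V (φ s)) s) :
    ContDiff 𝕜 (⊤ : ℕ∞) (fun s => ρ u (φ s)) ∧
    (∀ s, HasDerivAt (fun s => ρ u (φ s)) (ρ ⁅u, v⁆ (φ s) + c u) s) ∧
    ∀ j s, iteratedDeriv (j + 1) (fun s => ρ u (φ s)) s = ρ (b (j + 1)) (φ s) + c (b j) := by
  subst hb0
  have hderiv (w : 𝔤) (s : 𝕜) :
      HasDerivAt (fun s => ρ w (φ s)) (ρ ⁅w, v⁆ (φ s) + c w) s := by
    rw [← hc w (φ s)]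
    exact (hρ w (φ s)).hasFDerivAt.comp_hasDerivAt s (hφ s)
  have hseq (j : ℕ) (s : 𝕜) :
      HasDerivAt (fun s => ρ (b j) (φ s)) (ρ (b (j + 1)) (φ s) + c (b j)) s :=
    hbs j ▸ hderiv (b j) s
  exact ⟨contDiff_infty_of_hasDerivAt_add_const (f := fun j s => ρ (b j) (φ s)) hseq,
    hderiv (b 0), fun j => congrFun <|
      iteratedDeriv_succ_of_hasDerivAt_add_const (f := fun j s => ρ (b j) (φ s)) hseq j⟩

theorem flow_evaluation_derivatives
    {n : ℕ} (hn : 1 ≤ n)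
    {𝔤 : Type*} [LieRing 𝔤] [LieAlgebra ℝ 𝔤] [FiniteDimensional ℝ 𝔤]
    (ρ : 𝔤 →ₗ[ℝ] (M n → ℝ))
    (hρ : ∀ u : 𝔤, ContDiff ℝ (⊤ : ℕ∞) (ρ u))
    -- X u is the Hamiltonian vector field of ρ u
    (X : 𝔤 → M n → M n)
    (hX : ∀ (u : 𝔤) (x w : M n), ω₀ (X u x) w = fderiv ℝ (ρ u) x w)
    -- c is a bilinear map with {ρ u, ρ v}(x) = ρ ⁅u,v⁆ x + c u v
    (c : 𝔤 →ₗ[ℝ] 𝔤 →ₗ[ℝ] ℝ)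
    (hc : ∀ (u v : 𝔤) (x : M n), fderiv ℝ (ρ u) x (X v x) = ρ ⁅u, v⁆ x + c u v)
    -- fixed u, v and the iterated brackets b
    (u v : 𝔤) (b : ℕ → 𝔤) (hb0 : b 0 = u) (hbs : ∀ j : ℕ, b (j + 1) = ⁅b j, v⁆)
    -- φ is an integral curve of X v through x
    (x : M n) (φ : ℝ → M n)
    (hφ0 : φ 0 = x) (hφ : ∀ s : ℝ, HasDerivAt φ (X v (φ s)) s) :
    ContDiff ℝ (⊤ : ℕ∞) (fun s : ℝ => ρ u (φ s)) ∧
    (∀ s : ℝ, HasDerivAt (fun s : ℝ => ρ u (φ s)) (ρ ⁅u, v⁆ (φ s) + c u v) s) ∧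
    iteratedDeriv 0 (fun s : ℝ => ρ u (φ s)) 0 = ρ u x ∧
    (∀ j : ℕ, 1 ≤ j →
      iteratedDeriv j (fun s : ℝ => ρ u (φ s)) 0 = ρ (b j) x + c (b (j - 1)) v) := by
  obtain ⟨hsmooth, hderiv, hiter⟩ := flow_evaluation_derivatives_general ρ
    (fun w => (hρ w).differentiable (by simp)) (X v) v (c · v) (hc · v) u b hb0 hbs φ hφ
  exact hφ0 ▸ ⟨hsmooth, hderiv, congrFun iteratedDeriv_zero 0, fun | j + 1, _ => hiter j 0⟩
end
end

section
/- In the setting of a weakly Hamiltonian action with Casimir-valued cocycle, the flow evaluation ζ(s) := ρ u (φ s) is real analytic on all of ℝ, and for every s ∈ ℝ the power series expansion at zero converges to it: ζ(s) = ∑_{j=0}^∞ a_j s^j / j! (as a convergent sum), where a_0 := ρ u x and a_j := ρ (b j) x + c (b (j−1)) v for j ≥ 1. -/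
/-!
STATEMENT 10: Weakly Hamiltonian action setting.  The flow evaluation
ζ(s) := ρ u (φ s) is real analytic on all of ℝ, and for every s ∈ ℝ its
power series expansion at zero converges to it:
ζ(s) = ∑_{j=0}^∞ a_j s^j / j!, where a_0 := ρ u x and
a_j := ρ (b j) x + c (b (j−1)) v for j ≥ 1.
-/

noncomputable section

/-!
The functions `f 0 = ρ u ∘ φ` and `f (j + 1) = ρ (b (j + 1)) ∘ φ + c (b j) v` satisfy
`(f j)' = f (j + 1)`: the bracket relation expresses the derivative of `ρ w` along the flow of
`X v`, and the cocycle term is a constant, so it is lost at the next differentiation. Since the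
iterated brackets span a finite-dimensional space, so do the `f j`. A finite spanning subfamily
therefore solves a linear system `Y' = B Y` with constant coefficients, whose solution
`exp (s B) (Y 0)` is an everywhere convergent power series in `s`.
-/

section LinearSystem

variable {F G : Type*} [NormedAddCommGroup F] [NormedSpace ℝ F] [NormedAddCommGroup G]
  [NormedSpace ℝ G] {B : G →L[ℝ] G} {Y : ℝ → G}

theorem eq_exp_smul_apply_of_hasDerivAt [CompleteSpace G] (hY : ∀ s, HasDerivAt Y (B (Y s)) s)
    (s : ℝ) : Y s = NormedSpace.exp (s • B) (Y 0) := by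
  have hexp (t : ℝ) : HasDerivAt (fun r : ℝ => NormedSpace.exp (r • B) (Y 0))
      (B (NormedSpace.exp (t • B) (Y 0))) t := by
    simpa using (hasDerivAt_exp_smul_const' (𝕂 := ℝ) B t).clm_apply (hasDerivAt_const t (Y 0))
  have huniq : Y = fun r : ℝ => NormedSpace.exp (r • B) (Y 0) :=
    ODE_solution_unique_univ (v := fun _ => B) (s := fun _ => Set.univ) (t₀ := 0)
      (fun _ => B.lipschitz.lipschitzOnWith) (fun t => ⟨hY t, trivial⟩)
      (fun t => ⟨hexp t, trivial⟩) (by simp)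
  exact congrFun huniq s

theorem analyticAt_of_hasDerivAt_linear [CompleteSpace G]
    (hY : ∀ s, HasDerivAt Y (B (Y s)) s) (s : ℝ) : AnalyticAt ℝ Y s := by
  have hexp : AnalyticAt ℝ (fun r : ℝ => NormedSpace.exp (r • B)) s :=
    (NormedSpace.exp_analytic (s • B)).comp (f := fun r : ℝ => r • B)
      (analyticAt_id.smul analyticAt_const)
  rw [funext (eq_exp_smul_apply_of_hasDerivAt hY)]
  exact ((ContinuousLinearMap.apply ℝ G (Y 0)).analyticAt _).comp hexp

theorem hasSum_pow_apply_of_hasDerivAt_linear [CompleteSpace G]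
    (hY : ∀ s, HasDerivAt Y (B (Y s)) s) (s : ℝ) :
    HasSum (fun j : ℕ => (s ^ j / (j.factorial : ℝ)) • (B ^ j) (Y 0)) (Y s) := by
  have h := (NormedSpace.exp_series_hasSum_exp' (𝕂 := ℝ) (s • B)).mapL
    (ContinuousLinearMap.apply ℝ G (Y 0))
  simpa [← eq_exp_smul_apply_of_hasDerivAt hY, smul_pow, smul_smul, div_eq_inv_mul] using h

theorem apply_pow_apply_eq_of_hasDerivAt_succ {f : ℕ → ℝ → F} {ℓ : G →L[ℝ] F}
    (hY : ∀ s, HasDerivAt Y (B (Y s)) s) (hf : ∀ j s, HasDerivAt (f j) (f (j + 1) s) s)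
    (hℓ : ∀ s, ℓ (Y s) = f 0 s) (j : ℕ) (s : ℝ) : ℓ ((B ^ j) (Y s)) = f j s := by
  induction j generalizing s with
  | zero => simpa using hℓ s
  | succ j ih =>
    have hderiv : HasDerivAt (fun r => ℓ ((B ^ j) (Y r))) (ℓ ((B ^ (j + 1)) (Y s))) s := by
      rw [pow_succ]
      exact (ℓ ∘L B ^ j).hasFDerivAt.comp_hasDerivAt s (hY s)
    rw [funext ih] at hderiv
    exact hderiv.unique (hf j s)

end LinearSystem

theorem exists_clm_apply_eq_of_mem_span_range {R α ι F : Type*} [CommSemiring R] [Finite ι]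
    [AddCommMonoid F] [Module R F] [TopologicalSpace F] [ContinuousAdd F] [ContinuousConstSMul R F]
    {g : ι → α → F} {h : α → F} (hh : h ∈ Submodule.span R (Set.range g)) :
    ∃ ℓ : (ι → F) →L[R] F, ∀ x, ℓ (fun i => g i x) = h x := by
  cases nonempty_fintype ι
  obtain ⟨k, rfl⟩ := (Submodule.mem_span_range_iff_exists_fun R).1 hh
  exact ⟨∑ i, k i • ContinuousLinearMap.proj i, fun x => by simp⟩

section IteratedDerivatives

variable {F : Type*} [NormedAddCommGroup F] [NormedSpace ℝ F] {f : ℕ → ℝ → F}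

theorem exists_linear_system_of_hasDerivAt_succ (hf : ∀ j s, HasDerivAt (f j) (f (j + 1) s) s)
    (hfin : (Submodule.span ℝ (Set.range f)).FG) :
    ∃ (t : Finset (ℝ → F)) (Y : ℝ → t → F) (B : (t → F) →L[ℝ] (t → F)) (ℓ : (t → F) →L[ℝ] F),
      (∀ s, HasDerivAt Y (B (Y s)) s) ∧ ∀ s, ℓ (Y s) = f 0 s := by
  obtain ⟨t, ht, hspan⟩ := (Submodule.fg_span_iff_fg_span_finset_subset _).1 hfin
  have hmem (j : ℕ) : f j ∈ Submodule.span ℝ (Set.range ((↑) : t → ℝ → F)) := by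
    rw [Subtype.range_coe_subtype, Finset.setOfPred_mem, ← hspan]
    exact Submodule.subset_span ⟨j, rfl⟩
  choose ℓ hℓ using fun j => exists_clm_apply_eq_of_mem_span_range (hmem j)
  choose index hindex using fun g : t => ht g.2
  refine ⟨t, fun s g => g.1 s, ContinuousLinearMap.pi fun g => ℓ (index g + 1), ℓ 0,
    fun s => hasDerivAt_pi.2 fun g => ?_, hℓ 0⟩
  simpa [hℓ, hindex] using hf (index g) s

theorem analyticAt_of_hasDerivAt_succ [CompleteSpace F]
    (hf : ∀ j s, HasDerivAt (f j) (f (j + 1) s) s)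
    (hfin : (Submodule.span ℝ (Set.range f)).FG) (s : ℝ) : AnalyticAt ℝ (f 0) s := by
  obtain ⟨t, Y, B, ℓ, hY, hℓ⟩ := exists_linear_system_of_hasDerivAt_succ hf hfin
  rw [← funext hℓ]
  exact (ℓ.analyticAt _).comp (analyticAt_of_hasDerivAt_linear hY s)

theorem hasSum_taylor_of_hasDerivAt_succ [CompleteSpace F]
    (hf : ∀ j s, HasDerivAt (f j) (f (j + 1) s) s)
    (hfin : (Submodule.span ℝ (Set.range f)).FG) (s : ℝ) :
    HasSum (fun j : ℕ => (s ^ j / (j.factorial : ℝ)) • f j 0) (f 0 s) := by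
  obtain ⟨t, Y, B, ℓ, hY, hℓ⟩ := exists_linear_system_of_hasDerivAt_succ hf hfin
  have h := (hasSum_pow_apply_of_hasDerivAt_linear hY s).mapL ℓ
  simpa only [map_smul, hℓ, apply_pow_apply_eq_of_hasDerivAt_succ hY hf hℓ] using h

end IteratedDerivatives

theorem fg_span_range_apply_add_const {K V E α ι : Type*} [DivisionRing K] [AddCommGroup V]
    [Module K V] (ρ : V →ₗ[K] (E → K)) {b : ι → V} (hb : (Submodule.span K (Set.range b)).FG)
    (φ : α → E) (κ : ι → K) :
    (Submodule.span K (Set.range fun j s => ρ (b j) (φ s) + κ j)).FG := by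
  let pullback : V →ₗ[K] (α → K) := LinearMap.funLeft K K φ ∘ₗ ρ
  let W : Submodule K (α → K) := (Submodule.span K (Set.range b)).map pullback ⊔ K ∙ 1
  have hW : W.FG := (hb.map pullback).sup (Submodule.fg_span_singleton 1)
  refine hW.of_le (Submodule.span_le.2 ?_)
  rintro _ ⟨j, rfl⟩
  refine Submodule.mem_sup.2 ⟨pullback (b j), ?_, κ j • 1, ?_, ?_⟩
  · exact Submodule.mem_map_of_mem (Submodule.subset_span ⟨j, rfl⟩)
  · exact Submodule.smul_mem _ _ (Submodule.mem_span_singleton_self 1)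
  · ext s
    simp [pullback]

theorem flow_evaluation_analytic_with_expansion_general
    {E : Type*} [NormedAddCommGroup E] [NormedSpace ℝ E] {𝔤 : Type*} [LieRing 𝔤] [LieAlgebra ℝ 𝔤]
    (ρ : 𝔤 →ₗ[ℝ] (E → ℝ)) (hρ : ∀ w, Differentiable ℝ (ρ w)) (v : 𝔤) (V : E → E) (c : 𝔤 → ℝ)
    (hV : ∀ w y, fderiv ℝ (ρ w) y (V y) = ρ ⁅w, v⁆ y + c w)
    (b : ℕ → 𝔤) (hb : ∀ j, b (j + 1) = ⁅b j, v⁆) (hfin : (Submodule.span ℝ (Set.range b)).FG)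
    (φ : ℝ → E) (hφ : ∀ s, HasDerivAt φ (V (φ s)) s)
    (a : ℕ → ℝ) (ha0 : a 0 = ρ (b 0) (φ 0))
    (ha : ∀ j, a (j + 1) = ρ (b (j + 1)) (φ 0) + c (b j)) :
    (∀ s, AnalyticAt ℝ (fun s => ρ (b 0) (φ s)) s) ∧
    (∀ s, HasSum (fun j : ℕ => a j * s ^ j / (j.factorial : ℝ)) (ρ (b 0) (φ s))) := by
  let κ : ℕ → ℝ := fun j => a j - ρ (b j) (φ 0)
  let f : ℕ → ℝ → ℝ := fun j s => ρ (b j) (φ s) + κ j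
  have hf0 : f 0 = fun s => ρ (b 0) (φ s) := by simp [f, κ, ha0]
  have hfa (j : ℕ) : f j 0 = a j := by simp [f, κ]
  have hf (j : ℕ) (s : ℝ) : HasDerivAt (f j) (f (j + 1) s) s := by
    have hflow := ((hρ (b j) (φ s)).hasFDerivAt.comp_hasDerivAt s (hφ s)).add_const (κ j)
    simpa [f, κ, ha, hV, hb] using hflow
  have hspan : (Submodule.span ℝ (Set.range f)).FG := fg_span_range_apply_add_const ρ hfin φ κ
  refine ⟨fun s => hf0 ▸ analyticAt_of_hasDerivAt_succ hf hspan s, fun s => ?_⟩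
  simpa [hf0, hfa, mul_comm, mul_div_assoc] using hasSum_taylor_of_hasDerivAt_succ hf hspan s

theorem flow_evaluation_analytic_with_expansion
    {n : ℕ} (hn : 1 ≤ n)
    {𝔤 : Type*} [LieRing 𝔤] [LieAlgebra ℝ 𝔤] [FiniteDimensional ℝ 𝔤]
    (ρ : 𝔤 →ₗ[ℝ] (M n → ℝ))
    (hρ : ∀ u : 𝔤, ContDiff ℝ (⊤ : ℕ∞) (ρ u))
    -- X u is the Hamiltonian vector field of ρ u
    (X : 𝔤 → M n → M n)
    (hX : ∀ (u : 𝔤) (x w : M n), ω₀ (X u x) w = fderiv ℝ (ρ u) x w)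
    -- c is a bilinear map with {ρ u, ρ v}(x) = ρ ⁅u,v⁆ x + c u v
    (c : 𝔤 →ₗ[ℝ] 𝔤 →ₗ[ℝ] ℝ)
    (hc : ∀ (u v : 𝔤) (x : M n), fderiv ℝ (ρ u) x (X v x) = ρ ⁅u, v⁆ x + c u v)
    -- fixed u, v and the iterated brackets b
    (u v : 𝔤) (b : ℕ → 𝔤) (hb0 : b 0 = u) (hbs : ∀ j : ℕ, b (j + 1) = ⁅b j, v⁆)
    -- φ is an integral curve of X v through x
    (x : M n) (φ : ℝ → M n)
    (hφ0 : φ 0 = x) (hφ : ∀ s : ℝ, HasDerivAt φ (X v (φ s)) s)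
    -- the coefficients of the expansion
    (a : ℕ → ℝ) (ha0 : a 0 = ρ u x)
    (haj : ∀ j : ℕ, 1 ≤ j → a j = ρ (b j) x + c (b (j - 1)) v) :
    (∀ s : ℝ, AnalyticAt ℝ (fun s : ℝ => ρ u (φ s)) s) ∧
    (∀ s : ℝ, HasSum (fun j : ℕ => a j * s ^ j / (Nat.factorial j : ℝ))
      (ρ u (φ s))) := by
  subst hb0 hφ0
  exact flow_evaluation_analytic_with_expansion_general ρ
    (fun w => (hρ w).differentiable (by simp)) v (X v) (fun w => c w v) (fun w => hc w v) b hbs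
    (IsNoetherian.noetherian _) φ hφ a ha0 fun j => haj (j + 1) (by simp)
end
end

section
/- In the abelian weakly Hamiltonian setting with nondegenerate constant cocycle c on V and global flows φ_v: for every y ∈ M there exists a unique v ∈ V such that ρ u (φ_v 1 y) = 0 for all u ∈ V. In particular the set N := {x ∈ M | ρ u x = 0 for all u ∈ V} is nonempty. -/
/-!
STATEMENT 12: Abelian weakly Hamiltonian setting with nondegenerate constant
cocycle c on V and global flows φ v: for every y ∈ M there is a unique v ∈ V
such that ρ u (φ v 1 y) = 0 for all u ∈ V.  In particular
N := {x ∈ M | ρ u x = 0 for all u ∈ V} is nonempty.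
-/

noncomputable section

/-!
Along the integral curves of `X v` each `ρ u` grows at the constant rate `c u v`, so the time-one
map of the flow shifts the functional `u ↦ ρ u y` by `u ↦ c u v`. A point lies in the zero level
exactly when its functional vanishes, and nondegeneracy of `c` makes `v ↦ (u ↦ c u v)` a bijection
onto the dual of `V`, so exactly one `v` cancels the functional of `y`.
-/

section ConstantRate

variable {E G : Type*} [NormedAddCommGroup E] [NormedSpace ℝ E]
  [NormedAddCommGroup G] [NormedSpace ℝ G]

lemma eq_add_smul_of_hasDerivAt_const {f : ℝ → G} {a : G} (hf : ∀ s, HasDerivAt f a s) (t : ℝ) :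
    f t = f 0 + t • a := by
  have hderiv (s : ℝ) : HasDerivAt (fun r ↦ f r - r • a) 0 s := by
    simpa only [one_smul, sub_self] using (hf s).fun_sub ((hasDerivAt_id' s).smul_const a)
  have hconst : f t - t • a = f 0 - (0 : ℝ) • a :=
    is_const_of_deriv_eq_zero (fun s ↦ (hderiv s).differentiableAt) (fun s ↦ (hderiv s).deriv) t 0
  rwa [zero_smul, sub_zero, sub_eq_iff_eq_add] at hconst

lemma apply_integralCurve_eq_add_smul {F : E → G} (hF : Differentiable ℝ F) {Y : ℝ → E → E} {a : G}
    (hFY : ∀ t x, fderiv ℝ F x (Y t x) = a) {γ : ℝ → E} (hγ : IsIntegralCurve γ Y) (t : ℝ) :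
    F (γ t) = F (γ 0) + t • a := by
  have hrate (s : ℝ) : HasDerivAt (F ∘ γ) a s := by
    rw [← hFY s (γ s)]
    exact (hF (γ s)).hasFDerivAt.comp_hasDerivAt s (hγ s)
  exact eq_add_smul_of_hasDerivAt_const hrate t

end ConstantRate

lemma existsUnique_forall_add_apply_eq_zero {R V W : Type*} [CommRing R] [AddCommGroup V]
    [Module R V] [AddCommGroup W] [Module R W] {c : V →ₗ[R] W →ₗ[R] R}
    (hc : Function.Bijective c.flip) (f : Module.Dual R V) :
    ∃! w : W, ∀ u : V, f u + c u w = 0 := by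
  have hrep : ∃! w : W, c.flip w = -f := hc.existsUnique (-f)
  simpa only [eq_neg_iff_add_eq_zero, add_comm _ f, LinearMap.ext_iff, LinearMap.add_apply,
    LinearMap.flip_apply, LinearMap.zero_apply] using hrep

lemma bijective_flip_of_separatingLeft {K V W : Type*} [Field K] [AddCommGroup V] [Module K V]
    [FiniteDimensional K V] [AddCommGroup W] [Module K W] [FiniteDimensional K W]
    {c : V →ₗ[K] W →ₗ[K] K} (hc : c.SeparatingLeft)
    (hdim : Module.finrank K V = Module.finrank K W) : Function.Bijective c.flip := by
  have hinj : Function.Injective c :=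
    LinearMap.ker_eq_bot.1 (LinearMap.separatingLeft_iff_ker_eq_bot.1 hc)
  have hsurj : Function.Surjective c :=
    (LinearMap.injective_iff_surjective_of_finrank_eq_finrank
      (hdim.trans Subspace.dual_finrank_eq.symm)).1 hinj
  exact LinearMap.flip_bijective_iff₁.2 ⟨hinj, hsurj⟩

theorem unique_translation_into_zero_level_general
    {E : Type*} [NormedAddCommGroup E] [NormedSpace ℝ E]
    {V W : Type*} [AddCommGroup V] [Module ℝ V] [AddCommGroup W] [Module ℝ W]
    (ρ : V →ₗ[ℝ] (E → ℝ)) (hρ : ∀ u : V, Differentiable ℝ (ρ u))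
    (X : W → E → E) (c : V →ₗ[ℝ] W →ₗ[ℝ] ℝ)
    (hρX : ∀ (u : V) (w : W) (x : E), fderiv ℝ (ρ u) x (X w x) = c u w)
    (hc : Function.Bijective c.flip)
    (φ : W → ℝ → E → E) (hφ0 : ∀ (w : W) (y : E), φ w 0 y = y)
    (hφ : ∀ (w : W) (y : E), IsIntegralCurve (fun t ↦ φ w t y) (fun _ ↦ X w)) :
    (∀ y : E, ∃! w : W, ∀ u : V, ρ u (φ w 1 y) = 0) ∧
    (∃ x : E, ∀ u : V, ρ u x = 0) := by
  have htime_one (u : V) (w : W) (y : E) : ρ u (φ w 1 y) = ρ u y + c u w := by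
    simpa only [hφ0, one_smul] using
      apply_integralCurve_eq_add_smul (hρ u) (fun _ ↦ hρX u w) (hφ w y) 1
  have hexists (y : E) : ∃! w : W, ∀ u : V, ρ u (φ w 1 y) = 0 := by
    simpa only [htime_one, LinearMap.comp_apply, LinearMap.proj_apply] using
      existsUnique_forall_add_apply_eq_zero hc (LinearMap.proj y ∘ₗ ρ)
  obtain ⟨w, hw, -⟩ := hexists 0
  exact ⟨hexists, φ w 1 0, hw⟩

theorem unique_translation_into_zero_level
    {n : ℕ} (hn : 1 ≤ n)
    {V : Type*} [AddCommGroup V] [Module ℝ V] [FiniteDimensional ℝ V]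
    (ρ : V →ₗ[ℝ] (M n → ℝ))
    (hρ : ∀ u : V, ContDiff ℝ (⊤ : ℕ∞) (ρ u))
    -- X u is the Hamiltonian vector field of ρ u
    (X : V → M n → M n)
    (hX : ∀ (u : V) (x w : M n), ω₀ (X u x) w = fderiv ℝ (ρ u) x w)
    -- c is an alternating bilinear form with {ρ u, ρ v}(x) = c u v
    (c : V →ₗ[ℝ] V →ₗ[ℝ] ℝ)
    (h_alt : ∀ u : V, c u u = 0)
    (hbr : ∀ (u v : V) (x : M n), fderiv ℝ (ρ u) x (X v x) = c u v)
    -- c is nondegenerate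
    (h_nondeg : ∀ u : V, u ≠ 0 → ∃ v : V, c u v ≠ 0)
    -- φ v is a global flow of X v
    (φ : V → ℝ → M n → M n)
    (hφ0 : ∀ (v : V) (y : M n), φ v 0 y = y)
    (hφ : ∀ (v : V) (y : M n) (s : ℝ),
      HasDerivAt (fun t => φ v t y) (X v (φ v s y)) s) :
    (∀ y : M n, ∃! v : V, ∀ u : V, ρ u (φ v 1 y) = 0) ∧
    (∃ x : M n, ∀ u : V, ρ u x = 0) := by
  have hc : c.SeparatingLeft := fun u hu ↦ by contrapose! hu; exact h_nondeg u hu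
  exact unique_translation_into_zero_level_general ρ (fun u ↦ (hρ u).differentiable (by simp)) X c
    hbr (bijective_flip_of_separatingLeft hc rfl) φ hφ0 hφ
end
end

section
/- In the abelian weakly Hamiltonian setting with nondegenerate constant cocycle c on V: for every x ∈ M, the linear map from M to the dual space of V sending w to the functional u ↦ fderiv ℝ (ρ u) x (w) is surjective. (Hence 0 is a regular value of the map x ↦ (ρ u x)_{u ∈ V}, and N = {x | ρ u x = 0 ∀ u ∈ V} is a submanifold transverse to the Hamiltonian orbits.) -/
/-!
STATEMENT 14: Abelian weakly Hamiltonian setting with nondegenerate constant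
cocycle c on V: for every x ∈ M, the map sending w ∈ M to the linear functional
u ↦ fderiv ℝ (ρ u) x (w) on V is surjective onto the dual of V.  (Hence 0 is a
regular value of x ↦ (ρ u x)_{u ∈ V}.)
-/

noncomputable section

theorem surjective_flip_of_separatingLeft
    {K V W : Type*} [Field K] [AddCommGroup V] [Module K V] [FiniteDimensional K V]
    [AddCommGroup W] [Module K W] {c : V →ₗ[K] W →ₗ[K] K} (hc : c.SeparatingLeft) :
    Function.Surjective c.flip :=
  LinearMap.flip_surjective_iff₁.2 <|
    LinearMap.ker_eq_bot.1 (LinearMap.separatingLeft_iff_ker_eq_bot.1 hc)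

theorem differentials_surject_onto_dual_general
    {𝕜 E V W : Type*} [NontriviallyNormedField 𝕜] [NormedAddCommGroup E] [NormedSpace 𝕜 E]
    [AddCommGroup V] [Module 𝕜 V] [FiniteDimensional 𝕜 V] [AddCommGroup W] [Module 𝕜 W]
    {ρ : V → E → 𝕜} {ρ' : V → E →L[𝕜] 𝕜} {x : E} (hρ : ∀ u, HasFDerivAt (ρ u) (ρ' u) x)
    {X : W → E} {c : V →ₗ[𝕜] W →ₗ[𝕜] 𝕜} (hX : ∀ u v, ρ' u (X v) = c u v)
    (hc : c.SeparatingLeft) (ℓ : V →ₗ[𝕜] 𝕜) :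
    ∃ w, ∀ u, fderiv 𝕜 (ρ u) x w = ℓ u := by
  obtain ⟨v, rfl⟩ := surjective_flip_of_separatingLeft hc ℓ
  exact ⟨X v, fun u => by rw [(hρ u).fderiv, hX, LinearMap.flip_apply]⟩

theorem differentials_surject_onto_dual
    {n : ℕ} (hn : 1 ≤ n)
    {V : Type*} [AddCommGroup V] [Module ℝ V] [FiniteDimensional ℝ V]
    (ρ : V →ₗ[ℝ] (M n → ℝ))
    (hρ : ∀ u : V, ContDiff ℝ (⊤ : ℕ∞) (ρ u))
    -- X u is the Hamiltonian vector field of ρ u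
    (X : V → M n → M n)
    (hX : ∀ (u : V) (x w : M n), ω₀ (X u x) w = fderiv ℝ (ρ u) x w)
    -- c is an alternating bilinear form with {ρ u, ρ v}(x) = c u v
    (c : V →ₗ[ℝ] V →ₗ[ℝ] ℝ)
    (h_alt : ∀ u : V, c u u = 0)
    (hbr : ∀ (u v : V) (x : M n), fderiv ℝ (ρ u) x (X v x) = c u v)
    -- c is nondegenerate
    (h_nondeg : ∀ u : V, u ≠ 0 → ∃ v : V, c u v ≠ 0) :
    ∀ x : M n, ∀ ℓ : V →ₗ[ℝ] ℝ, ∃ w : M n, ∀ u : V, fderiv ℝ (ρ u) x w = ℓ u := by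
  have hc : c.SeparatingLeft := fun u hu =>
    by_contra fun hne => (h_nondeg u hne).elim fun v hv => hv (hu v)
  exact fun x => differentials_surject_onto_dual_general
    (fun u => ((hρ u).differentiable (by simp) x).hasFDerivAt) (fun u v => hbr u v x) hc
end
end

section
/- In the setting of a weakly Hamiltonian action with Casimir-valued cocycle, suppose the iterated brackets terminate: b k = 0 for some k (as happens when 𝔤 is nilpotent). If the integral curve φ of X_{ρ v} through x is periodic, i.e. there exists T > 0 with φ(s + T) = φ(s) for all s ∈ ℝ, then ρ (b j) x + c (b (j−1)) v = 0 for every j ≥ 1; in particular x lies in the zero level set of the function y ↦ ρ ⁅u,v⁆ y + c u v. -/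
/-!
STATEMENT 16: Weakly Hamiltonian action setting with terminating iterated
brackets (b k = 0 for some k).  If the integral curve φ of X (ρ v) through x is
periodic with some period T > 0, then ρ (b j) x + c (b (j−1)) v = 0 for every
j ≥ 1; in particular x is in the zero level set of y ↦ ρ ⁅u,v⁆ y + c u v.
-/

noncomputable section

/-!
Along the integral curve, the function `ρ (b j)` has derivative `ρ (b (j + 1)) + c (b j) v`, which
is the next function of the chain shifted by a constant. If that next function is constant along
the orbit, then `ρ (b j)` is affine in time. A periodic orbit keeps coming back, so an affine
function along it has slope zero, and the vanishing of the derivatives descends the chain from the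
step at which the brackets terminate.
-/

open Filter Bornology

section Derivatives

variable {F : Type*} [NormedAddCommGroup F] [NormedSpace ℝ F]

theorem eq_smul_add_of_hasDerivAt_const {f : ℝ → F} {a : F} (hf : ∀ s, HasDerivAt f a s) (s : ℝ) :
    f s = s • a + f 0 := by
  have hderiv (t : ℝ) : HasDerivAt (fun r ↦ f r - r • a) 0 t := by
    simpa using (hf t).fun_sub ((hasDerivAt_id t).smul_const a)
  have hconst := is_const_of_deriv_eq_zero (fun t ↦ (hderiv t).differentiableAt)
    (fun t ↦ (hderiv t).deriv) s 0
  simpa [sub_eq_iff_eq_add'] using hconst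

theorem tendsto_smul_add_cocompact_cobounded {a : F} (ha : a ≠ 0) (b : F) :
    Tendsto (fun s : ℝ ↦ s • a + b) (cocompact ℝ) (cobounded F) := by
  refine (tendsto_add_const_cobounded b).comp (tendsto_norm_atTop_iff_cobounded.mp ?_)
  simp only [norm_smul]
  exact tendsto_norm_cocompact_atTop.atTop_mul_const (norm_pos_iff.mpr ha)

theorem eq_zero_of_hasDerivAt_const_of_mapClusterPt {f : ℝ → F} {a y : F}
    (hf : ∀ s, HasDerivAt f a s) (hy : MapClusterPt y (cocompact ℝ) f) : a = 0 := by
  by_contra ha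
  have hescape : Tendsto f (cocompact ℝ) (cobounded F) := by
    simpa only [← eq_smul_add_of_hasDerivAt_const hf] using
      tendsto_smul_add_cocompact_cobounded ha (f 0)
  exact hy.neBot.ne ((Metric.disjoint_nhds_cobounded y).mono_right hescape).eq_bot

theorem deriv_eq_zero_iff_of_mapClusterPt {f f' f'' : ℝ → F} {y : F}
    (hf : ∀ s, HasDerivAt f (f' s) s) (hf' : ∀ s, HasDerivAt f' (f'' s) s)
    (hy : MapClusterPt y (cocompact ℝ) f) : f' = 0 ↔ f'' = 0 := by
  constructor
  · rintro rfl
    exact funext fun s ↦ (hf' s).unique (hasDerivAt_const s 0)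
  · rintro rfl
    have hconst (s t : ℝ) : f' s = f' t :=
      is_const_of_deriv_eq_zero (fun r ↦ (hf' r).differentiableAt) (fun r ↦ (hf' r).deriv) s t
    exact funext fun s ↦
      eq_zero_of_hasDerivAt_const_of_mapClusterPt (fun t ↦ hconst t s ▸ hf t) hy

theorem deriv_chain_eq_zero_of_mapClusterPt {f : ℕ → ℝ → F} {d y : ℕ → F}
    (hf : ∀ j s, HasDerivAt (f j) (f (j + 1) s + d j) s)
    (hy : ∀ j, MapClusterPt (y j) (cocompact ℝ) (f j))
    {k : ℕ} (hk : ∀ s, f (k + 1) s + d k = 0) (j : ℕ) (s : ℝ) : f (j + 1) s + d j = 0 := by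
  have hiff (i : ℕ) : (fun t ↦ f (i + 1) t + d i) = 0 ↔ (fun t ↦ f 1 t + d 0) = 0 := by
    induction i with
    | zero => rfl
    | succ i ih =>
      exact (deriv_eq_zero_iff_of_mapClusterPt (hf i)
        (fun t ↦ (hf (i + 1) t).add_const (d i)) (hy i)).symm.trans ih
  exact congrFun ((hiff j).mpr ((hiff k).mp (funext hk))) s

end Derivatives

theorem mapClusterPt_atTop_of_periodic {α Y : Type*} [AddCommGroup α] [LinearOrder α]
    [IsOrderedAddMonoid α] [Archimedean α] [TopologicalSpace Y] {f : α → Y} {T : α}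
    (hf : Function.Periodic f T) (hT : 0 < T) (a : α) : MapClusterPt (f a) atTop f := by
  have hreturn : Tendsto (fun n : ℕ ↦ a + n • T) atTop atTop :=
    tendsto_atTop_add_const_left _ a (tendsto_id.atTop_nsmul_const hT)
  refine MapClusterPt.of_comp hreturn (Tendsto.mapClusterPt ?_)
  exact tendsto_const_nhds.congr fun n ↦ (hf.nsmul n a).symm

/-- `V` is the vector field of `v`, and `κ u` plays the role of `c u v`. A cluster point of `φ`
along `cocompact ℝ` is an `α`- or `ω`-limit point of the orbit. -/
theorem periodic_orbit_in_level_set_general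
    {E F 𝔤 : Type*} [NormedAddCommGroup E] [NormedSpace ℝ E] [NormedAddCommGroup F]
    [NormedSpace ℝ F] [LieRing 𝔤] [LieAlgebra ℝ 𝔤]
    (ρ : 𝔤 →ₗ[ℝ] (E → F)) (hρ : ∀ u, Differentiable ℝ (ρ u))
    (v : 𝔤) (V : E → E) (κ : 𝔤 →ₗ[ℝ] F)
    (hV : ∀ u y, fderiv ℝ (ρ u) y (V y) = ρ ⁅u, v⁆ y + κ u)
    (b : ℕ → 𝔤) (hb : ∀ j, b (j + 1) = ⁅b j, v⁆) {k : ℕ} (hk : b k = 0)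
    (φ : ℝ → E) (hφ : ∀ s, HasDerivAt φ (V (φ s)) s)
    {y : E} (hy : MapClusterPt y (cocompact ℝ) φ) (j : ℕ) (s : ℝ) :
    ρ (b (j + 1)) (φ s) + κ (b j) = 0 := by
  have hderiv (i : ℕ) (t : ℝ) : HasDerivAt (ρ (b i) ∘ φ) (ρ (b (i + 1)) (φ t) + κ (b i)) t := by
    rw [hb, ← hV]
    exact (hρ (b i) (φ t)).hasFDerivAt.comp_hasDerivAt t (hφ t)
  have hcluster (i : ℕ) : MapClusterPt (ρ (b i) y) (cocompact ℝ) (ρ (b i) ∘ φ) :=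
    hy.continuousAt_comp (hρ (b i) y).continuousAt
  have hterm (t : ℝ) : ρ (b (k + 1)) (φ t) + κ (b k) = 0 := by simp [hb, hk]
  exact deriv_chain_eq_zero_of_mapClusterPt hderiv hcluster hterm j s

theorem periodic_orbit_in_level_set
    {n : ℕ} (hn : 1 ≤ n)
    {𝔤 : Type*} [LieRing 𝔤] [LieAlgebra ℝ 𝔤] [FiniteDimensional ℝ 𝔤]
    (ρ : 𝔤 →ₗ[ℝ] (M n → ℝ))
    (hρ : ∀ u : 𝔤, ContDiff ℝ (⊤ : ℕ∞) (ρ u))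
    -- X u is the Hamiltonian vector field of ρ u
    (X : 𝔤 → M n → M n)
    (hX : ∀ (u : 𝔤) (x w : M n), ω₀ (X u x) w = fderiv ℝ (ρ u) x w)
    -- c is a bilinear map with {ρ u, ρ v}(x) = ρ ⁅u,v⁆ x + c u v
    (c : 𝔤 →ₗ[ℝ] 𝔤 →ₗ[ℝ] ℝ)
    (hc : ∀ (u v : 𝔤) (x : M n), fderiv ℝ (ρ u) x (X v x) = ρ ⁅u, v⁆ x + c u v)
    -- fixed u, v and the iterated brackets b, terminating at some step k
    (u v : 𝔤) (b : ℕ → 𝔤) (hb0 : b 0 = u) (hbs : ∀ j : ℕ, b (j + 1) = ⁅b j, v⁆)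
    (k : ℕ) (hbk : b k = 0)
    -- φ is an integral curve of X v through x
    (x : M n) (φ : ℝ → M n)
    (hφ0 : φ 0 = x) (hφ : ∀ s : ℝ, HasDerivAt φ (X v (φ s)) s)
    -- φ is periodic with period T > 0
    (T : ℝ) (hT : 0 < T) (hper : ∀ s : ℝ, φ (s + T) = φ s) :
    (∀ j : ℕ, 1 ≤ j → ρ (b j) x + c (b (j - 1)) v = 0) ∧
    ρ ⁅u, v⁆ x + c u v = 0 := by
  have hzero (j : ℕ) : ρ (b (j + 1)) x + c (b j) v = 0 :=
    hφ0 ▸ periodic_orbit_in_level_set_general ρ (fun w ↦ (hρ w).differentiable (by simp)) v (X v)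
      (c.flip v) (fun w y ↦ hc w v y) b hbs hbk φ hφ
      ((mapClusterPt_atTop_of_periodic hper hT 0).mono atTop_le_cocompact) j 0
  exact ⟨fun j hj ↦ Nat.sub_add_cancel hj ▸ hzero (j - 1), by simpa only [hbs, hb0] using hzero 0⟩
end
end

section
/- In the setting of a weakly Hamiltonian action with Casimir-valued cocycle, suppose b k = 0 for some k, and suppose that ρ (b j) x + c (b (j−1)) v ≠ 0 for some j ≥ 1. Then for every a ∈ ℝ the set {s ∈ ℝ | ρ u (φ s) = a} is finite; i.e. the orbit of X_{ρ v} through x intersects every level set of ρ u only finitely many times. -/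
/-!
STATEMENT 17: Weakly Hamiltonian action setting with terminating iterated
brackets (b k = 0 for some k).  If ρ (b j) x + c (b (j−1)) v ≠ 0 for some j ≥ 1,
then for every a ∈ ℝ the set {s ∈ ℝ | ρ u (φ s) = a} is finite: the orbit of
X (ρ v) through x meets every level set of ρ u only finitely many times.
-/

noncomputable section

/-!
Along an integral curve `φ` of a vector field `V`, the `j`-th derivative of `f ∘ φ` is
`L_V^j f ∘ φ`. For `f = ρ u` and `V = X_{ρ v}` the cocycle identity makes `L_V^j f` equal to
`ρ (b j) + c (b (j - 1)) v` for `j ≥ 1`, the constants being killed by the next derivative. So if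
the brackets terminate, `ρ u ∘ φ` is a polynomial; a nonzero derivative at `0` makes it
nonconstant, and a nonconstant polynomial takes every value finitely often.
-/

section PolynomialFunctions

open Polynomial

theorem exists_polynomial_derivative_eq {K : Type*} [DivisionRing K] [CharZero K] (q : K[X]) :
    ∃ p : K[X], derivative p = q := by
  induction q using Polynomial.induction_on' with
  | add q₁ q₂ h₁ h₂ =>
    obtain ⟨p₁, rfl⟩ := h₁
    obtain ⟨p₂, rfl⟩ := h₂
    exact ⟨p₁ + p₂, derivative_add⟩
  | monomial m r =>
    have hm : (m : K) + 1 ≠ 0 := Nat.cast_add_one_ne_zero m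
    exact ⟨monomial (m + 1) (r / (m + 1)), by simp [hm]⟩

theorem finite_setOf_eval_eq {R : Type*} [CommRing R] [IsDomain R] {p : R[X]} {a : R}
    (hp : p ≠ C a) : {s | p.eval s = a}.Finite := by
  contrapose! hp with hinf
  exact p.eq_of_infinite_eval_eq (C a) (by simpa only [eval_C] using hinf)

variable {𝕜 : Type*} [RCLike 𝕜] {f : 𝕜 → 𝕜} {k : ℕ}

theorem exists_polynomial_of_deriv_eq_eval (hf : Differentiable 𝕜 f) {q : 𝕜[X]}
    (hq : ∀ s, deriv f s = q.eval s) : ∃ p : 𝕜[X], ∀ s, f s = p.eval s := by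
  obtain ⟨p, rfl⟩ := exists_polynomial_derivative_eq q
  have hconst : ∀ s, f s - p.eval s = f 0 - p.eval 0 := fun s =>
    is_const_of_deriv_eq_zero (f := fun t => f t - p.eval t) (hf.sub p.differentiable)
      (fun t => by rw [deriv_fun_sub (hf t) p.differentiableAt, hq, p.deriv, sub_self]) s 0
  refine ⟨p + C (f 0 - p.eval 0), fun s => ?_⟩
  rw [eval_add, eval_C, ← hconst s, add_sub_cancel]

theorem exists_polynomial_of_iteratedDeriv_eq_zero (hf : ContDiff 𝕜 k f)
    (hk : iteratedDeriv k f = 0) : ∃ p : 𝕜[X], ∀ s, f s = p.eval s := by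
  induction k generalizing f with
  | zero => exact ⟨0, fun s => by simpa using congrFun hk s⟩
  | succ k ih =>
    rw [Nat.cast_succ] at hf
    obtain ⟨hdiff, -, hderiv⟩ := contDiff_succ_iff_deriv.1 hf
    obtain ⟨q, hq⟩ := ih hderiv (by rwa [← iteratedDeriv_succ'])
    exact exists_polynomial_of_deriv_eq_eval hdiff hq

theorem finite_setOf_eq_of_iteratedDeriv_eq_zero (hf : ContDiff 𝕜 k f)
    (hk : iteratedDeriv k f = 0) (hne : ∃ j s, 1 ≤ j ∧ iteratedDeriv j f s ≠ 0) (a : 𝕜) :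
    {s | f s = a}.Finite := by
  obtain ⟨p, hp⟩ := exists_polynomial_of_iteratedDeriv_eq_zero hf hk
  have hpa : p ≠ C a := by
    rintro rfl
    obtain ⟨j, s, hj, hjs⟩ := hne
    have hfa : f = fun _ => a := funext fun t => by rw [hp, eval_C]
    exact hjs (by rw [hfa, iteratedDeriv_const, if_neg (by lia)])
  simpa only [hp] using finite_setOf_eval_eq hpa

end PolynomialFunctions

section LieDerivative

open scoped ContDiff

/-- The Lie derivative `L_V f` of a function `f` along a vector field `V`. As with `fderiv`, its
value is `0` at points where `f` is not differentiable. -/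
def lieDerivative (𝕜 : Type*) [NontriviallyNormedField 𝕜] {E F : Type*} [NormedAddCommGroup E]
    [NormedSpace 𝕜 E] [NormedAddCommGroup F] [NormedSpace 𝕜 F] (V : E → E) (f : E → F) : E → F :=
  fun x => fderiv 𝕜 f x (V x)

section NormedField

variable {𝕜 : Type*} [NontriviallyNormedField 𝕜] {E F : Type*} [NormedAddCommGroup E]
  [NormedSpace 𝕜 E] [NormedAddCommGroup F] [NormedSpace 𝕜 F] {V : E → E}

theorem iterate_lieDerivative_succ {g : ℕ → E → F} {γ : ℕ → F}
    (hg : ∀ j, lieDerivative 𝕜 V (g j) = fun x => g (j + 1) x + γ j) (j : ℕ) :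
    (lieDerivative 𝕜 V)^[j + 1] (g 0) = fun x => g (j + 1) x + γ j := by
  induction j with
  | zero => exact hg 0
  | succ j ih =>
    rw [Function.iterate_succ_apply', ih, ← hg (j + 1)]
    funext x
    simp only [lieDerivative, fderiv_add_const]

variable {f : E → F} {φ : 𝕜 → E} {k : ℕ}

theorem deriv_comp_integralCurve (hφ : ∀ s, HasDerivAt φ (V (φ s)) s)
    (hf : Differentiable 𝕜 f) : deriv (f ∘ φ) = lieDerivative 𝕜 V f ∘ φ :=
  funext fun s => ((hf (φ s)).hasFDerivAt.comp_hasDerivAt s (hφ s)).deriv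

theorem iteratedDeriv_comp_integralCurve (hφ : ∀ s, HasDerivAt φ (V (φ s)) s)
    (hf : ∀ j < k, Differentiable 𝕜 ((lieDerivative 𝕜 V)^[j] f)) :
    iteratedDeriv k (f ∘ φ) = (lieDerivative 𝕜 V)^[k] f ∘ φ := by
  induction k with
  | zero => exact iteratedDeriv_zero
  | succ k ih =>
    rw [iteratedDeriv_succ, ih fun j hj => hf j (hj.trans k.lt_succ_self),
      deriv_comp_integralCurve hφ (hf k k.lt_succ_self), Function.iterate_succ_apply']

theorem contDiff_comp_integralCurve (hφ : ∀ s, HasDerivAt φ (V (φ s)) s)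
    (hf : ∀ j, Differentiable 𝕜 ((lieDerivative 𝕜 V)^[j] f)) : ContDiff 𝕜 ∞ (f ∘ φ) :=
  contDiff_of_differentiable_iteratedDeriv fun j _ => by
    rw [iteratedDeriv_comp_integralCurve hφ fun i _ => hf i]
    exact (hf j).comp fun s => (hφ s).differentiableAt

end NormedField

variable {𝕜 : Type*} [RCLike 𝕜] {E : Type*} [NormedAddCommGroup E] [NormedSpace 𝕜 E]

theorem finite_setOf_comp_integralCurve_eq {V : E → E} {f : E → 𝕜} {φ : 𝕜 → E} {k : ℕ}
    (hφ : ∀ s, HasDerivAt φ (V (φ s)) s)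
    (hf : ∀ j, Differentiable 𝕜 ((lieDerivative 𝕜 V)^[j] f))
    (hk : (lieDerivative 𝕜 V)^[k] f = 0)
    (hne : ∃ j s, 1 ≤ j ∧ (lieDerivative 𝕜 V)^[j] f (φ s) ≠ 0) (a : 𝕜) :
    {s | f (φ s) = a}.Finite := by
  have hiter (j : ℕ) : iteratedDeriv j (f ∘ φ) = (lieDerivative 𝕜 V)^[j] f ∘ φ :=
    iteratedDeriv_comp_integralCurve hφ fun i _ => hf i
  have hsmooth : ContDiff 𝕜 k (f ∘ φ) :=
    (contDiff_comp_integralCurve hφ hf).of_le (mod_cast le_top)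
  refine finite_setOf_eq_of_iteratedDeriv_eq_zero hsmooth ?_ ?_ a
  · rw [hiter, hk, Pi.zero_comp]
  · simpa only [hiter, Function.comp_apply] using hne

/-- `V` and `c` play the roles of the vector field `X_{ρ v}` and the cocycle values `c (·) v`. -/
theorem orbit_meets_level_sets_finitely_general {𝔤 : Type*} [LieRing 𝔤] (ρ : 𝔤 →+ (E → 𝕜))
    (hρ : ∀ w, Differentiable 𝕜 (ρ w)) (V : E → E) (c : 𝔤 → 𝕜) (u v : 𝔤)
    (hc : ∀ w x, fderiv 𝕜 (ρ w) x (V x) = ρ ⁅w, v⁆ x + c w)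
    (b : ℕ → 𝔤) (hb0 : b 0 = u) (hbs : ∀ j, b (j + 1) = ⁅b j, v⁆) (k : ℕ) (hbk : b k = 0)
    (x : E) (φ : 𝕜 → E) (hφ0 : φ 0 = x) (hφ : ∀ s, HasDerivAt φ (V (φ s)) s)
    (hne : ∃ j, 1 ≤ j ∧ ρ (b j) x + c (b (j - 1)) ≠ 0) (a : 𝕜) :
    {s | ρ u (φ s) = a}.Finite := by
  subst hb0 hφ0
  have hlie (j : ℕ) : (lieDerivative 𝕜 V)^[j + 1] (ρ (b 0)) =
      fun x => ρ (b (j + 1)) x + c (b j) :=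
    iterate_lieDerivative_succ (g := fun j => ρ (b j)) (γ := fun j => c (b j))
      (fun j => funext fun x => by rw [hbs, ← hc, lieDerivative]) j
  have hdiff : ∀ j, Differentiable 𝕜 ((lieDerivative 𝕜 V)^[j] (ρ (b 0)))
    | 0 => hρ (b 0)
    | j + 1 => hlie j ▸ (hρ (b (j + 1))).add_const (c (b j))
  have hc0 : c 0 = 0 := by simpa using (hc 0 (φ 0)).symm
  have hvanish : (lieDerivative 𝕜 V)^[k + 1] (ρ (b 0)) = 0 := by
    rw [hlie, hbs, hbk, zero_lie, map_zero, hc0]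
    exact funext fun _ => add_zero 0
  refine finite_setOf_comp_integralCurve_eq hφ hdiff hvanish ?_ a
  obtain ⟨j, hj, hjne⟩ := hne
  obtain ⟨i, rfl⟩ := Nat.exists_eq_add_of_le' hj
  exact ⟨i + 1, 0, hj, by rwa [hlie]⟩

end LieDerivative

theorem orbit_meets_level_sets_finitely
    {n : ℕ} (hn : 1 ≤ n)
    {𝔤 : Type*} [LieRing 𝔤] [LieAlgebra ℝ 𝔤] [FiniteDimensional ℝ 𝔤]
    (ρ : 𝔤 →ₗ[ℝ] (M n → ℝ))
    (hρ : ∀ u : 𝔤, ContDiff ℝ (⊤ : ℕ∞) (ρ u))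
    -- X u is the Hamiltonian vector field of ρ u
    (X : 𝔤 → M n → M n)
    (hX : ∀ (u : 𝔤) (x w : M n), ω₀ (X u x) w = fderiv ℝ (ρ u) x w)
    -- c is a bilinear map with {ρ u, ρ v}(x) = ρ ⁅u,v⁆ x + c u v
    (c : 𝔤 →ₗ[ℝ] 𝔤 →ₗ[ℝ] ℝ)
    (hc : ∀ (u v : 𝔤) (x : M n), fderiv ℝ (ρ u) x (X v x) = ρ ⁅u, v⁆ x + c u v)
    -- fixed u, v and the iterated brackets b, terminating at some step k
    (u v : 𝔤) (b : ℕ → 𝔤) (hb0 : b 0 = u) (hbs : ∀ j : ℕ, b (j + 1) = ⁅b j, v⁆)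
    (k : ℕ) (hbk : b k = 0)
    -- φ is an integral curve of X v through x
    (x : M n) (φ : ℝ → M n)
    (hφ0 : φ 0 = x) (hφ : ∀ s : ℝ, HasDerivAt φ (X v (φ s)) s)
    -- some coefficient of the expansion is nonzero
    (hne : ∃ j : ℕ, 1 ≤ j ∧ ρ (b j) x + c (b (j - 1)) v ≠ 0) :
    ∀ a : ℝ, {s : ℝ | ρ u (φ s) = a}.Finite := by
  exact orbit_meets_level_sets_finitely_general (ρ : 𝔤 →+ (M n → ℝ))
    (fun w => (hρ w).differentiable (by simp)) (X v) (c · v) u v (hc · v) b hb0 hbs k hbk x φ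
    hφ0 hφ hne
end
end

section
/- In the setting of a weakly Hamiltonian action with Casimir-valued cocycle, suppose b k = 0 for some k, and suppose that ρ (b j) x + c (b (j−1)) v = 0 for every j ≥ 1. Then the flow evaluation is constant: ρ u (φ s) = ρ u x for all s ∈ ℝ; i.e. the orbit of X_{ρ v} through x is entirely contained in the level set of ρ u through x. -/
/-!
STATEMENT 18: Weakly Hamiltonian action setting with terminating iterated
brackets (b k = 0 for some k).  If ρ (b j) x + c (b (j−1)) v = 0 for every j ≥ 1,
then the flow evaluation is constant: ρ u (φ s) = ρ u x for all s ∈ ℝ, i.e. the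
orbit of X (ρ v) through x is contained in the level set of ρ u through x.
-/

noncomputable section

/-! Let `D = ⁅·, v⁆`. On the span of the iterated brackets of `u` with `v`, the function
`y w t = ρ w (φ t) - ρ w x` has time derivative `y (D w) t + (ρ (D w) x + c w v)`, and the constant
term vanishes by linearity in `w`. So the `y w` solve a homogeneous linear system, finite-dimensional
when the span is, and start at zero; by uniqueness of solutions they vanish identically. -/

theorem eq_zero_of_hasDerivAt_clm_apply {E : Type*} [NormedAddCommGroup E] [NormedSpace ℝ E]
    (L : E →L[ℝ] E) {y : ℝ → E} {t₀ : ℝ} (hy : ∀ t, HasDerivAt y (L (y t)) t) (hy₀ : y t₀ = 0) :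
    y = 0 :=
  ODE_solution_unique_univ (v := fun _ => L) (s := fun _ => Set.univ) (t₀ := t₀)
    (fun _ => L.lipschitz.lipschitzOnWith) (fun t => ⟨hy t, Set.mem_univ _⟩)
    (fun t => ⟨(map_zero L).symm ▸ hasDerivAt_const t 0, Set.mem_univ _⟩) hy₀

theorem linearMap_eq_zero_of_hasDerivAt_apply {V F : Type*} [AddCommGroup V] [Module ℝ V]
    [FiniteDimensional ℝ V] [NormedAddCommGroup F] [NormedSpace ℝ F]
    (D : Module.End ℝ V) (f : V →ₗ[ℝ] (ℝ → F)) {t₀ : ℝ}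
    (hf : ∀ w t, HasDerivAt (f w) (f (D w) t) t) (hf₀ : ∀ w, f w t₀ = 0) : f = 0 := by
  let e := Module.finBasis ℝ V
  let L : (Fin (Module.finrank ℝ V) → F) →L[ℝ] (Fin (Module.finrank ℝ V) → F) :=
    ContinuousLinearMap.pi fun i => ∑ j, e.repr (D (e i)) j • ContinuousLinearMap.proj j
  have hL (t : ℝ) (i) : L (fun j => f (e j) t) i = f (D (e i)) t :=
    calc
      _ = ∑ j, e.repr (D (e i)) j • f (e j) t := by simp [L]
      _ = f (∑ j, e.repr (D (e i)) j • e j) t := by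
        simp only [map_sum, map_smul, Finset.sum_apply, Pi.smul_apply]
      _ = f (D (e i)) t := by rw [e.sum_repr]
  have hsol (t : ℝ) : HasDerivAt (fun t i => f (e i) t) (L fun i => f (e i) t) t :=
    hasDerivAt_pi.2 fun i => by simpa only [hL] using hf (e i) t
  have hzero := eq_zero_of_hasDerivAt_clm_apply L hsol (funext fun i => hf₀ (e i))
  exact e.ext fun i => funext fun t => congrFun (congrFun hzero t) i

theorem span_range_mem_invtSubmodule {R V : Type*} [Semiring R] [AddCommMonoid V] [Module R V]
    {D : Module.End R V} {b : ℕ → V} (hb : ∀ j, b (j + 1) = D (b j)) :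
    Submodule.span R (Set.range b) ∈ D.invtSubmodule := by
  rw [Module.End.mem_invtSubmodule, Submodule.span_le]
  rintro _ ⟨j, rfl⟩
  exact Submodule.subset_span ⟨j + 1, hb j⟩

section IntegralCurve

variable {E F V : Type*} [NormedAddCommGroup E] [NormedSpace ℝ E]
  [NormedAddCommGroup F] [NormedSpace ℝ F] [AddCommGroup V] [Module ℝ V]
  {ρ : V →ₗ[ℝ] (E → F)} {Y : E → E} {D : Module.End ℝ V} {c : V →ₗ[ℝ] F} {φ : ℝ → E}

theorem apply_integralCurve_eq_of_mem_invtSubmodule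
    (hρ : ∀ w, Differentiable ℝ (ρ w))
    (hD : ∀ w x, fderiv ℝ (ρ w) x (Y x) = ρ (D w) x + c w)
    (hφ : IsIntegralCurve φ fun _ => Y)
    {W : Submodule ℝ V} [FiniteDimensional ℝ W] (hW : W ∈ D.invtSubmodule) {t₀ : ℝ}
    (hc : ∀ w ∈ W, ρ (D w) (φ t₀) + c w = 0) {w : V} (hw : w ∈ W) (t : ℝ) :
    ρ w (φ t) = ρ w (φ t₀) := by
  let f : W →ₗ[ℝ] (ℝ → F) :=
    (LinearMap.funLeft ℝ F φ - LinearMap.funLeft ℝ F fun _ => φ t₀) ∘ₗ ρ ∘ₗ W.subtype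
  have hf (w : W) (t : ℝ) : HasDerivAt (f w) (f (D.restrict hW w) t) t := by
    have hderiv : HasDerivAt (f w) (ρ (D w) (φ t) + c w) t := by
      rw [← hD]
      exact ((hρ w _).hasFDerivAt.comp_hasDerivAt t (hφ t)).sub_const _
    have hcoeff : ρ (D w) (φ t) + c w = f (D.restrict hW w) t := by
      change _ = ρ (D w) (φ t) - ρ (D w) (φ t₀)
      rw [eq_neg_of_add_eq_zero_right (hc w w.2), sub_eq_add_neg]
    rwa [hcoeff] at hderiv
  have hzero : f = 0 :=
    linearMap_eq_zero_of_hasDerivAt_apply (D.restrict hW) f hf fun _ => sub_self _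
  exact sub_eq_zero.1 (congrFun (LinearMap.congr_fun hzero ⟨w, hw⟩) t)

theorem orbit_contained_in_level_set_general
    (hρ : ∀ w, Differentiable ℝ (ρ w))
    (hD : ∀ w x, fderiv ℝ (ρ w) x (Y x) = ρ (D w) x + c w)
    (hφ : IsIntegralCurve φ fun _ => Y)
    {b : ℕ → V} (hb : ∀ j, b (j + 1) = D (b j))
    [FiniteDimensional ℝ (Submodule.span ℝ (Set.range b))] {t₀ : ℝ}
    (hc : ∀ j, ρ (b (j + 1)) (φ t₀) + c (b j) = 0) (j : ℕ) (t : ℝ) :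
    ρ (b j) (φ t) = ρ (b j) (φ t₀) := by
  have hc_span : ∀ w ∈ Submodule.span ℝ (Set.range b), ρ (D w) (φ t₀) + c w = 0 := by
    refine LinearMap.eqOn_span (f := LinearMap.proj (φ t₀) ∘ₗ ρ ∘ₗ D + c) (g := 0) ?_
    rintro _ ⟨j, rfl⟩
    simpa [← hb] using hc j
  exact apply_integralCurve_eq_of_mem_invtSubmodule hρ hD hφ (span_range_mem_invtSubmodule hb)
    hc_span (Submodule.subset_span ⟨j, rfl⟩) t

end IntegralCurve

theorem orbit_contained_in_level_set
    {n : ℕ} (hn : 1 ≤ n)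
    {𝔤 : Type*} [LieRing 𝔤] [LieAlgebra ℝ 𝔤] [FiniteDimensional ℝ 𝔤]
    (ρ : 𝔤 →ₗ[ℝ] (M n → ℝ))
    (hρ : ∀ u : 𝔤, ContDiff ℝ (⊤ : ℕ∞) (ρ u))
    -- X u is the Hamiltonian vector field of ρ u
    (X : 𝔤 → M n → M n)
    (hX : ∀ (u : 𝔤) (x w : M n), ω₀ (X u x) w = fderiv ℝ (ρ u) x w)
    -- c is a bilinear map with {ρ u, ρ v}(x) = ρ ⁅u,v⁆ x + c u v
    (c : 𝔤 →ₗ[ℝ] 𝔤 →ₗ[ℝ] ℝ)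
    (hc : ∀ (u v : 𝔤) (x : M n), fderiv ℝ (ρ u) x (X v x) = ρ ⁅u, v⁆ x + c u v)
    -- fixed u, v and the iterated brackets b, terminating at some step k
    (u v : 𝔤) (b : ℕ → 𝔤) (hb0 : b 0 = u) (hbs : ∀ j : ℕ, b (j + 1) = ⁅b j, v⁆)
    (k : ℕ) (hbk : b k = 0)
    -- φ is an integral curve of X v through x
    (x : M n) (φ : ℝ → M n)
    (hφ0 : φ 0 = x) (hφ : ∀ s : ℝ, HasDerivAt φ (X v (φ s)) s)
    -- all coefficients of the expansion vanish
    (hall : ∀ j : ℕ, 1 ≤ j → ρ (b j) x + c (b (j - 1)) v = 0) :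
    ∀ s : ℝ, ρ u (φ s) = ρ u x := by
  subst hb0 hφ0
  exact orbit_contained_in_level_set_general (c := c.flip v)
    (D := (LieAlgebra.ad ℝ 𝔤 : 𝔤 →ₗ[ℝ] Module.End ℝ 𝔤).flip v)
    (fun w => (hρ w).differentiable (by simp)) (fun w => hc w v) hφ hbs
    (fun j => hall (j + 1) j.succ_pos) 0
end
end
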